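/- Let F be a presheaf on 𝒱I with a minimal generating family ((W_i)_{i∈I}, q), let (V,x) be a central element of F, and for each i ∈ I let δ_i : V → W_i be an injective linear map with x = δ_i^*φ_i; write V_i := δ_i(V). Then for every morphism α ∈ 𝒢_{(F,q)}(U ⊆ W_i, U' ⊆ W_j) and every v ∈ U ∩ V_i, one has α(v) = δ_j((δ_i|^{V_i})^{-1}(v)), where δ_i|^{V_i} : V → V_i is the corestriction of δ_i. -/

import Mathlib

set_option maxHeartbeats 1000000

namespace Paper

/-- A finite-dimensional vector space over `𝔽_p = ZMod p`: an object of the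
categories `𝒱^f` and `𝒱I`. -/
structure FDVec (p : ℕ) [Fact p.Prime] : Type 1 where
  carrier : Type
  [addCommGroup' : AddCommGroup carrier]
  [module' : Module (ZMod p) carrier]
  [finiteDimensional' : FiniteDimensional (ZMod p) carrier]

attribute [instance] FDVec.addCommGroup' FDVec.module' FDVec.finiteDimensional'

instance (p : ℕ) [Fact p.Prime] : CoeSort (FDVec p) Type := ⟨FDVec.carrier⟩

abbrev FDVec.of (p : ℕ) [Fact p.Prime] (X : Type) [AddCommGroup X] [Module (ZMod p) X]
    [FiniteDimensional (ZMod p) X] : FDVec p := ⟨X⟩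

variable {p : ℕ} [Fact p.Prime]

/-- The object of `𝒱I` determined by a subspace. -/
abbrev subFD {W : FDVec p} (U : Submodule (ZMod p) W) : FDVec p := FDVec.of p U

theorem comp_injective {A B C : Type} [AddCommGroup A] [Module (ZMod p) A]
    [AddCommGroup B] [Module (ZMod p) B] [AddCommGroup C] [Module (ZMod p) C]
    (f : A →ₗ[ZMod p] B) (g : B →ₗ[ZMod p] C)
    (hf : Function.Injective f) (hg : Function.Injective g) :
    Function.Injective (g ∘ₗ f) := fun _ _ h => hf (hg h)

theorem linearMap_id_injective (V : Type) [AddCommGroup V] [Module (ZMod p) V] :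
    Function.Injective (LinearMap.id : V →ₗ[ZMod p] V) := fun _ _ h => h

theorem equiv_toLinearMap_injective {A B : Type} [AddCommGroup A] [Module (ZMod p) A]
    [AddCommGroup B] [Module (ZMod p) B] (e : A ≃ₗ[ZMod p] B) :
    Function.Injective (e.toLinearMap : A →ₗ[ZMod p] B) := e.injective

/-- A presheaf on the category `𝒱I` of finite-dimensional `𝔽_p`-vector spaces
and injective linear maps: a contravariant functor to `Set`. -/
structure VIPresheaf (p : ℕ) [Fact p.Prime] where
  obj : FDVec p → Type
  map : ∀ {V W : FDVec p} (f : V →ₗ[ZMod p] W), Function.Injective f → obj W → obj V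
  map_id : ∀ (V : FDVec p) (h : Function.Injective (LinearMap.id : V →ₗ[ZMod p] V))
      (x : obj V), map LinearMap.id h x = x
  map_comp : ∀ {V W X : FDVec p} (f : V →ₗ[ZMod p] W) (hf : Function.Injective f)
      (g : W →ₗ[ZMod p] X) (hg : Function.Injective g)
      (hgf : Function.Injective (g ∘ₗ f)) (x : obj X),
      map (g ∘ₗ f) hgf x = map f hf (map g hg x)

/-- A groupoid whose objects are the pairs `(U, i)` with `U` a subspace of `W i`,
and whose morphisms are linear isomorphisms between such subspaces. -/
structure SubGroupoid {ι : Type} (W : ι → FDVec p) where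
  mor : ∀ (i j : ι) (U : Submodule (ZMod p) (W i)) (U' : Submodule (ZMod p) (W j)),
    Set (↥U ≃ₗ[ZMod p] ↥U')
  id_mem : ∀ i U, LinearEquiv.refl (ZMod p) ↥U ∈ mor i i U U
  comp_mem : ∀ (i j k : ι) (U : Submodule (ZMod p) (W i)) (U' : Submodule (ZMod p) (W j))
      (U'' : Submodule (ZMod p) (W k)) (α : ↥U ≃ₗ[ZMod p] ↥U')
      (β : ↥U' ≃ₗ[ZMod p] ↥U''),
      α ∈ mor i j U U' → β ∈ mor j k U' U'' → (α.trans β) ∈ mor i k U U''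
  inv_mem : ∀ (i j : ι) (U : Submodule (ZMod p) (W i)) (U' : Submodule (ZMod p) (W j))
      (α : ↥U ≃ₗ[ZMod p] ↥U'),
      α ∈ mor i j U U' → α.symm ∈ mor j i U' U

section Restriction

variable {Wi Wj : FDVec p} {U : Submodule (ZMod p) Wi} {U' : Submodule (ZMod p) Wj}

/-- The restriction of `α : U ≃ U'` to a subspace `M ≤ U`, as a map to the ambient space. -/
def restrictMap (α : ↥U ≃ₗ[ZMod p] ↥U') {M : Submodule (ZMod p) Wi}
    (hMU : M ≤ U) : ↥M →ₗ[ZMod p] Wj :=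
  U'.subtype ∘ₗ (α.toLinearMap) ∘ₗ (Submodule.inclusion hMU)

theorem restrictMap_injective (α : ↥U ≃ₗ[ZMod p] ↥U')
    {M : Submodule (ZMod p) Wi} (hMU : M ≤ U) :
    Function.Injective (restrictMap α hMU) := by
  intro a b hab
  have h1 : α (Submodule.inclusion hMU a) = α (Submodule.inclusion hMU b) := Subtype.ext hab
  have h2 := α.injective h1
  have h3 := congrArg Subtype.val h2
  exact Subtype.ext h3

/-- The image `α(M)` of a subspace `M ≤ U` under `α : U ≃ U'`. -/
def restrictImg (α : ↥U ≃ₗ[ZMod p] ↥U') {M : Submodule (ZMod p) Wi}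
    (hMU : M ≤ U) : Submodule (ZMod p) Wj :=
  LinearMap.range (restrictMap α hMU)

/-- The restriction-corestriction `α_M : M ≃ α(M)` of `α : U ≃ U'` to `M ≤ U`. -/
noncomputable def restrictEquiv (α : ↥U ≃ₗ[ZMod p] ↥U')
    {M : Submodule (ZMod p) Wi} (hMU : M ≤ U) :
    ↥M ≃ₗ[ZMod p] ↥(restrictImg α hMU) :=
  LinearEquiv.ofInjective _ (restrictMap_injective α hMU)

end Restriction

/-- The restriction property of a groupoid on subspaces. -/
def SubGroupoid.HasRestriction {ι : Type} {W : ι → FDVec p} (G : SubGroupoid W) : Prop :=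
  ∀ (i j : ι) (U : Submodule (ZMod p) (W i)) (U' : Submodule (ZMod p) (W j))
    (α : ↥U ≃ₗ[ZMod p] ↥U'), α ∈ G.mor i j U U' →
    ∀ (M : Submodule (ZMod p) (W i)) (hMU : M ≤ U),
      restrictEquiv α hMU ∈ G.mor i j M (restrictImg α hMU)

/-- An element of `⊔_{i} Hom_{𝒱I}(V, W i)`. -/
def InjHom (V : FDVec p) {ι : Type} (W : ι → FDVec p) : Type :=
  Σ i : ι, {f : V →ₗ[ZMod p] W i // Function.Injective f}

/-- The relation `∼_𝒢` on `⊔_i Hom_{𝒱I}(V, W i)`. -/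
def SubGroupoid.Rel {ι : Type} {W : ι → FDVec p} (G : SubGroupoid W) (V : FDVec p)
    (x y : InjHom V W) : Prop :=
  ∃ α ∈ G.mor x.1 y.1 (LinearMap.range x.2.1) (LinearMap.range y.2.1),
    ∀ v : V, ((α (x.2.1.rangeRestrict v) : ↥(LinearMap.range y.2.1)) : W y.1) = y.2.1 v

/-- A generating family of a presheaf `F` on `𝒱I`: a natural surjection
`q : ⊔_i Hom_{𝒱I}(−, W i) → F`. -/
structure GenFamily {ι : Type} (W : ι → FDVec p) (F : VIPresheaf p) where
  q : ∀ (V : FDVec p) (i : ι) (f : V →ₗ[ZMod p] W i), Function.Injective f → F.obj V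
  natural : ∀ (T V : FDVec p) (β : T →ₗ[ZMod p] V) (hβ : Function.Injective β)
      (i : ι) (f : V →ₗ[ZMod p] W i) (hf : Function.Injective f)
      (hfβ : Function.Injective (f ∘ₗ β)),
      q T i (f ∘ₗ β) hfβ = F.map β hβ (q V i f hf)
  surjective : ∀ (V : FDVec p) (x : F.obj V), ∃ i f hf, q V i f hf = x

/-- `φ_i = q(id_{W i})`. -/
def GenFamily.phi {ι : Type} {W : ι → FDVec p} {F : VIPresheaf p} (Q : GenFamily W F)
    (i : ι) : F.obj (W i) :=
  Q.q (W i) i LinearMap.id (linearMap_id_injective _)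

/-- The morphisms of the groupoid `𝒢_{(F,q)}`: isomorphisms `α : U ≃ U'` with
`α^* ι_{U'}^* φ_j = ι_U^* φ_i`. -/
def GenFamily.mor {ι : Type} {W : ι → FDVec p} {F : VIPresheaf p} (Q : GenFamily W F)
    (i j : ι) (U : Submodule (ZMod p) (W i)) (U' : Submodule (ZMod p) (W j)) :
    Set (↥U ≃ₗ[ZMod p] ↥U') :=
  {α | F.map (V := subFD U) (W := subFD U') α.toLinearMap (equiv_toLinearMap_injective α)
        (F.map (V := subFD U') (W := W j) U'.subtype U'.injective_subtype (Q.phi j))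
      = F.map (V := subFD U) (W := W i) U.subtype U.injective_subtype (Q.phi i)}

/-- The relation `∼_{𝒢_{(F,q)}}`. -/
def GenFamily.GRel {ι : Type} {W : ι → FDVec p} {F : VIPresheaf p} (Q : GenFamily W F)
    (V : FDVec p) (x y : InjHom V W) : Prop :=
  ∃ α ∈ Q.mor x.1 y.1 (LinearMap.range x.2.1) (LinearMap.range y.2.1),
    ∀ v : V, ((α (x.2.1.rangeRestrict v) : ↥(LinearMap.range y.2.1)) : W y.1) = y.2.1 v

/-- `x ∈ F_i(V)`, where `F_i ⊆ F` is the image of `Hom_{𝒱I}(−, W i)` under `q`. -/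
def GenFamily.memComponent {ι : Type} {W : ι → FDVec p} {F : VIPresheaf p}
    (Q : GenFamily W F) (i : ι) (V : FDVec p) (x : F.obj V) : Prop :=
  ∃ f hf, Q.q V i f hf = x

/-- Minimality of a generating family: `F_i ⊄ F_j` for `i ≠ j`. -/
def GenFamily.Minimal {ι : Type} {W : ι → FDVec p} {F : VIPresheaf p}
    (Q : GenFamily W F) : Prop :=
  ∀ i j : ι, i ≠ j →
    ¬ (∀ (V : FDVec p) (x : F.obj V), Q.memComponent i V x → Q.memComponent j V x)

/-- A class in `𝐁(V, W)`, represented canonically by its "glue" subspace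
`G = {(ν m, −ω m) : m ∈ M} ⊆ V × W`.  The two conditions express the injectivity
of `ν` and of `ω` respectively. -/
structure Corr (p : ℕ) [Fact p.Prime] (V W : FDVec p) where
  carrier : Submodule (ZMod p) (↥V × ↥W)
  inj_left : ∀ m ∈ carrier, Prod.fst m = 0 → m = 0
  inj_right : ∀ m ∈ carrier, Prod.snd m = 0 → m = 0

/-- The pushout `V ⊕_{ν,ω} W` of a class of `𝐁(V,W)`. -/
abbrev Corr.po {V W : FDVec p} (c : Corr p V W) : FDVec p :=
  FDVec.of p ((↥V × ↥W) ⧸ c.carrier)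

/-- The canonical injection `ι_V : V → V ⊕_{ν,ω} W`. -/
def Corr.inl {V W : FDVec p} (c : Corr p V W) : V →ₗ[ZMod p] c.po :=
  c.carrier.mkQ ∘ₗ LinearMap.inl (ZMod p) ↥V ↥W

/-- The canonical injection `ι_W : W → V ⊕_{ν,ω} W`. -/
def Corr.inr {V W : FDVec p} (c : Corr p V W) : W →ₗ[ZMod p] c.po :=
  c.carrier.mkQ ∘ₗ LinearMap.inr (ZMod p) ↥V ↥W

theorem Corr.inl_injective {V W : FDVec p} (c : Corr p V W) :
    Function.Injective c.inl := by
  intro a b hab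
  have h : (Submodule.Quotient.mk ((a, 0) : ↥V × ↥W) : (↥V × ↥W) ⧸ c.carrier)
      = Submodule.Quotient.mk (b, 0) := hab
  have hmem : ((a, 0) : ↥V × ↥W) - (b, 0) ∈ c.carrier := by
    rwa [Submodule.Quotient.eq] at h
  have h2 := c.inj_right _ hmem (by simp)
  have h3 := congrArg Prod.fst h2
  simpa [sub_eq_zero] using h3

theorem Corr.inr_injective {V W : FDVec p} (c : Corr p V W) :
    Function.Injective c.inr := by
  intro a b hab
  have h : (Submodule.Quotient.mk ((0, a) : ↥V × ↥W) : (↥V × ↥W) ⧸ c.carrier)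
      = Submodule.Quotient.mk (0, b) := hab
  have hmem : ((0, a) : ↥V × ↥W) - (0, b) ∈ c.carrier := by
    rwa [Submodule.Quotient.eq] at h
  have h2 := c.inj_left _ hmem (by simp)
  have h3 := congrArg Prod.snd h2
  simpa [sub_eq_zero] using h3

/-- The fibre `σ_{(V,x)}F(W)` of `σ_V F(W) = ⊔_{𝐁(V,W)} F(V ⊕_{ν,ω} W)` over `x ∈ F(V)`. -/
def CentralFib (F : VIPresheaf p) (V : FDVec p) (x : F.obj V) (W : FDVec p) : Type :=
  Σ c : Corr p V W,
    {b : F.obj c.po // F.map (V := V) (W := c.po) c.inl c.inl_injective b = x}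

/-- The map `ρ_{F,(V,x)} : σ_{(V,x)}F(W) → F(W)`, sending `b` to `ι_W^* b`. -/
def centralMap (F : VIPresheaf p) (V : FDVec p) (x : F.obj V) (W : FDVec p) :
    CentralFib F V x W → F.obj W :=
  fun s => F.map (V := W) (W := Sigma.fst s |>.po) s.1.inr s.1.inr_injective s.2.1

/-- `(V, x)` is central for `F` if `ρ_{F,(V,x)}` is an isomorphism of presheaves. -/
def VIPresheaf.IsCentral (F : VIPresheaf p) (V : FDVec p) (x : F.obj V) : Prop :=
  ∀ W : FDVec p, Function.Bijective (centralMap F V x W)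

/-- The class of `𝐁(V, U)` associated with a pair of injections `δ : V → W`, `ε : U → W`:
its glue subspace is `ker(δ + ε) ⊆ V × U`. -/
def kerCorr {V U W : FDVec p} (δ : V →ₗ[ZMod p] W) (ε : U →ₗ[ZMod p] W)
    (hδ : Function.Injective δ) (hε : Function.Injective ε) : Corr p V U where
  carrier := LinearMap.ker (δ.coprod ε)
  inj_left := by
    intro m hm h1
    have hk : δ m.1 + ε m.2 = 0 := by simpa [LinearMap.mem_ker] using hm
    rw [h1] at hk
    simp only [map_zero, zero_add] at hk
    have h2 : m.2 = 0 := hε (by simpa using hk)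
    exact Prod.ext h1 h2
  inj_right := by
    intro m hm h2
    have hk : δ m.1 + ε m.2 = 0 := by simpa [LinearMap.mem_ker] using hm
    rw [h2] at hk
    simp only [map_zero, add_zero] at hk
    have h1 : m.1 = 0 := hδ (by simpa using hk)
    exact Prod.ext h1 h2

/-- The isomorphism `ε ↑ δ : V ⊕_{ν,μ} U ≃ δ(V) + ε(U)` of the first isomorphism theorem. -/
noncomputable def upArrow {V U W : FDVec p} (δ : V →ₗ[ZMod p] W) (ε : U →ₗ[ZMod p] W) :
    ((↥V × ↥U) ⧸ LinearMap.ker (δ.coprod ε)) ≃ₗ[ZMod p]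
      ↥(LinearMap.range δ ⊔ LinearMap.range ε : Submodule (ZMod p) W) :=
  (δ.coprod ε).quotKerEquivRange ≪≫ₗ LinearEquiv.ofEq _ _ (LinearMap.range_coprod δ ε)

/-- The class `[T, id_T, α] ∈ 𝐁(V, T)` associated with an injection `α : T → V`. -/
def idCorr {V T : FDVec p} (α : T →ₗ[ZMod p] V) (hα : Function.Injective α) :
    Corr p V T where
  carrier := LinearMap.range (α.prod (-(LinearMap.id : T →ₗ[ZMod p] T)))
  inj_left := by
    rintro m ⟨t, rfl⟩ h1
    simp only [LinearMap.prod_apply, Pi.prod, LinearMap.neg_apply, LinearMap.id_apply] at h1 ⊢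
    have ht : t = 0 := hα (by simpa using h1)
    simp [ht]
  inj_right := by
    rintro m ⟨t, rfl⟩ h2
    simp only [LinearMap.prod_apply, Pi.prod, LinearMap.neg_apply, LinearMap.id_apply] at h2 ⊢
    have ht : t = 0 := by simpa [neg_eq_zero] using h2
    simp [ht]

/-! If injections `δ : V → W` and `ε : U → W` and an element `z ∈ F(W)` satisfy `δ^* z = x`, then
the pullback of `z` to the pushout of `V` and `U` along `δ(V) ∩ ε(U)` is a `ρ`-preimage of
`ε^* z ∈ F(U)`. Injectivity of `ρ` therefore makes `ε^* z` determine the gluing of `V` and `U`, that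
is, the set of pairs `(v, u)` with `δ v = ε u`. A morphism `α : U → U'` of the groupoid says that
`φ_i` and `φ_j` have the same pullback along `ι_U` and `ι_{U'} ∘ α`, so `δ_i w = u` forces
`δ_j w = α u`. -/

theorem VIPresheaf.map_map_of_comp_eq (F : VIPresheaf p) {A B C : FDVec p}
    {f : A →ₗ[ZMod p] B} {g : B →ₗ[ZMod p] C} {k : A →ₗ[ZMod p] C}
    (hf : Function.Injective f) (hg : Function.Injective g) (hk : Function.Injective k)
    (hgf : g ∘ₗ f = k) (z : F.obj C) :
    F.map f hf (F.map g hg z) = F.map k hk z := by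
  subst hgf
  exact (F.map_comp f hf g hg hk z).symm

section Cospan

variable {V U W : FDVec p} {δ : V →ₗ[ZMod p] W} {ε : U →ₗ[ZMod p] W}
  (hδ : Function.Injective δ) (hε : Function.Injective ε)

theorem kerCorr.neg_mem_carrier_iff {v : V} {u : U} :
    (-v, u) ∈ (kerCorr δ ε hδ hε).carrier ↔ δ v = ε u := by
  change δ (-v) + ε u = 0 ↔ δ v = ε u
  rw [map_neg, neg_add_eq_zero]

/-- The map `V ⊕_{ν,μ} U → W` induced by `δ` and `ε`, through which elements of `F(W)` are pulled
back to the pushout: the isomorphism `ε ↑ δ` followed by the inclusion `δ(V) + ε(U) ⊆ W`. -/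
noncomputable def kerCorr.desc : (kerCorr δ ε hδ hε).po →ₗ[ZMod p] W :=
  (LinearMap.range δ ⊔ LinearMap.range ε).subtype ∘ₗ (upArrow δ ε).toLinearMap

theorem kerCorr.desc_injective : Function.Injective (kerCorr.desc hδ hε) :=
  (Submodule.injective_subtype _).comp (upArrow δ ε).injective

theorem kerCorr.desc_comp_inl : kerCorr.desc hδ hε ∘ₗ (kerCorr δ ε hδ hε).inl = δ :=
  LinearMap.coprod_inl δ ε

theorem kerCorr.desc_comp_inr : kerCorr.desc hδ hε ∘ₗ (kerCorr δ ε hδ hε).inr = ε :=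
  LinearMap.coprod_inr δ ε

variable {F : VIPresheaf p} {x : F.obj V} {z : F.obj W}

/-- The element of `σ_{(V,x)}F(U)` given by an element `z ∈ F(W)` with `δ^* z = x`: the pullback of
`z` to the pushout of `V` and `U`. It is the `ρ`-preimage of `ε^* z`. -/
noncomputable def CentralFib.ofCospan (hz : F.map δ hδ z = x) : CentralFib F V x U :=
  ⟨kerCorr δ ε hδ hε, F.map (kerCorr.desc hδ hε) (kerCorr.desc_injective hδ hε) z,
    (F.map_map_of_comp_eq _ _ _ (kerCorr.desc_comp_inl hδ hε) z).trans hz⟩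

theorem centralMap_ofCospan (hz : F.map δ hδ z = x) :
    centralMap F V x U (CentralFib.ofCospan hδ hε hz) = F.map ε hε z :=
  F.map_map_of_comp_eq _ _ _ (kerCorr.desc_comp_inr hδ hε) z

variable {W' : FDVec p} {δ' : V →ₗ[ZMod p] W'} {ε' : U →ₗ[ZMod p] W'} {z' : F.obj W'}
  {hδ hε} {hδ' : Function.Injective δ'} {hε' : Function.Injective ε'}

theorem kerCorr_eq_of_map_eq (hρ : Function.Injective (centralMap F V x U))
    (hz : F.map δ hδ z = x) (hz' : F.map δ' hδ' z' = x) (h : F.map ε hε z = F.map ε' hε' z') :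
    kerCorr δ ε hδ hε = kerCorr δ' ε' hδ' hε' := by
  have hfib : CentralFib.ofCospan hδ hε hz = CentralFib.ofCospan hδ' hε' hz' :=
    hρ (by rw [centralMap_ofCospan, centralMap_ofCospan, h])
  exact congrArg Sigma.fst hfib

theorem apply_eq_apply_iff_of_map_eq (hρ : Function.Injective (centralMap F V x U))
    (hz : F.map δ hδ z = x) (hz' : F.map δ' hδ' z' = x) (h : F.map ε hε z = F.map ε' hε' z')
    {v : V} {u : U} : δ v = ε u ↔ δ' v = ε' u := by
  rw [← kerCorr.neg_mem_carrier_iff hδ hε, kerCorr_eq_of_map_eq hρ hz hz' h,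
    kerCorr.neg_mem_carrier_iff]

end Cospan

theorem statement_15_general {F : VIPresheaf p} {V W W' : FDVec p} {x : F.obj V}
    {U : Submodule (ZMod p) W} {U' : Submodule (ZMod p) W'}
    (hρ : Function.Injective (centralMap F V x (subFD U)))
    {δ : V →ₗ[ZMod p] W} {hδ : Function.Injective δ} {z : F.obj W} (hz : F.map δ hδ z = x)
    {δ' : V →ₗ[ZMod p] W'} {hδ' : Function.Injective δ'} {z' : F.obj W'}
    (hz' : F.map δ' hδ' z' = x) {α : U ≃ₗ[ZMod p] U'}
    (hα : F.map (V := subFD U) (W := subFD U') α.toLinearMap (equiv_toLinearMap_injective α)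
        (F.map (V := subFD U') U'.subtype U'.injective_subtype z')
      = F.map (V := subFD U) U.subtype U.injective_subtype z)
    {v : V} (hv : δ v ∈ U) : (α ⟨δ v, hv⟩ : W') = δ' v := by
  have hε' : Function.Injective (U'.subtype ∘ₗ α.toLinearMap) :=
    U'.injective_subtype.comp α.injective
  have hpull := hα.symm.trans
    (F.map_map_of_comp_eq (A := subFD U) (B := subFD U') _ _ hε' rfl z')
  have hiff := apply_eq_apply_iff_of_map_eq hρ hz hz' hpull (v := v) (u := ⟨δ v, hv⟩)
  exact (hiff.mp rfl).symm

/-- **Statement 15.** Let `F` have a minimal generating family `((W_i), q)`, let `(V,x)` be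
central for `F`, and for each `i` let `δ_i : V → W_i` be injective with `x = δ_i^* φ_i`;
`V_i := δ_i(V)`.  Then for every `α ∈ 𝒢_{(F,q)}(U ⊆ W_i, U' ⊆ W_j)` and every
`v ∈ U ∩ V_i`, one has `α(v) = δ_j((δ_i|^{V_i})⁻¹(v))`; i.e. whenever `δ_i w ∈ U`,
`α(δ_i w) = δ_j w`. -/
theorem statement_15 {p : ℕ} [Fact p.Prime] {ι : Type} (W : ι → FDVec p)
    (F : VIPresheaf p) (Q : GenFamily W F) (hmin : Q.Minimal)
    (V : FDVec p) (x : F.obj V) (hx : F.IsCentral V x)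
    (δ : ∀ i, V →ₗ[ZMod p] W i) (hδ : ∀ i, Function.Injective (δ i))
    (hxδ : ∀ i, x = F.map (δ i) (hδ i) (Q.phi i))
    (i j : ι) (U : Submodule (ZMod p) (W i)) (U' : Submodule (ZMod p) (W j))
    (α : ↥U ≃ₗ[ZMod p] ↥U') (hα : α ∈ Q.mor i j U U')
    (w : ↥V) (hw : δ i w ∈ U) :
    ((α ⟨δ i w, hw⟩ : ↥U') : ↥(W j)) = δ j w :=
  statement_15_general (hx _).injective (hxδ i).symm (hxδ j).symm hα hw

end Paper
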